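/- Let w₁, w₂ ∈ S_m and set B := N(w₁) ∩ N(w₂). Assume B is nonempty and pairwise orthogonal. Then there exist w₁'', u, x ∈ S_m with N(w₁) ⊆ N(w₁''), w₁'' = u·x, |N(w₁'')| = |N(u)| + |N(x)|, |N(x)| = |B|, and B = {(u(i), u(j)) : (i,j) ∈ N(x)}, with u(i) < u(j) for every (i,j) ∈ N(x). (Equivalently, w₁'' has a reduced expression in which the roots of B are exactly the last |B| roots β_{ℓ(w₁'')−|B|+1}, …, β_{ℓ(w₁'')}.) -/

import Mathlib

/-- The inversion set `N(w) = {(i,j) | i < j, w⁻¹(i) > w⁻¹(j)}` of a permutation,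
realizing `Φ⁺(w)` in type `A_{m−1}`. -/
def invSet (m : ℕ) (w : Equiv.Perm (Fin m)) : Finset (Fin m × Fin m) :=
  Finset.univ.filter (fun p => p.1 < p.2 ∧ w⁻¹ p.2 < w⁻¹ p.1)

/-- A pair `(k, k+1)`, corresponding to a simple root. -/
def IsSimplePair {m : ℕ} (p : Fin m × Fin m) : Prop :=
  (p.1 : ℕ) + 1 = (p.2 : ℕ)

instance {m : ℕ} : DecidablePred (IsSimplePair (m := m)) :=
  fun p => inferInstanceAs (Decidable ((p.1 : ℕ) + 1 = (p.2 : ℕ)))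

/-- Orthogonality of the roots `e_i − e_j` and `e_k − e_l`: `{i,j} ∩ {k,l} = ∅`. -/
def OrthPair {m : ℕ} (p q : Fin m × Fin m) : Prop :=
  p.1 ≠ q.1 ∧ p.1 ≠ q.2 ∧ p.2 ≠ q.1 ∧ p.2 ≠ q.2

/-- A set of pairs is pairwise orthogonal. -/
def PairwiseOrth {m : ℕ} (B : Finset (Fin m × Fin m)) : Prop :=
  ∀ p ∈ B, ∀ q ∈ B, p ≠ q → OrthPair p q

/-!
Let `A` be a transitive set of pairs `i < j` (a closed set of positive roots), such as `N(w₁)`, and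
let `B = A ∩ N(w₂)`. Contract every pair of `B` to its smaller entry and list the entries `c` so
that `w₂⁻¹` of the contraction of `c` decreases; the two entries of a pair of `B` become neighbours.
Breaking ties increasingly gives `u`, breaking them decreasingly gives `w`, so `N(w)` is `N(u)`
together with `B`.

If `(i, j)` lies in `A` but not in `B` and `i`, `j` are contracted to `k`, `l`, then `(k, j)` lies
in `A` by transitivity and not in `B` by orthogonality, so it is not an inversion of `w₂`. Hence
`w₂⁻¹ k < w₂⁻¹ j ≤ w₂⁻¹ l`, and `w` inverts `(i, j)`.
-/

open Finset OrderDual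

section InversionSets

variable {m : ℕ} {u w : Equiv.Perm (Fin m)} {a b c : Fin m}

theorem mem_invSet : (a, b) ∈ invSet m w ↔ a < b ∧ w⁻¹ b < w⁻¹ a := by
  simp [invSet]

theorem invSet_trans (hab : (a, b) ∈ invSet m w) (hbc : (b, c) ∈ invSet m w) :
    (a, c) ∈ invSet m w := by
  rw [mem_invSet] at *
  exact ⟨hab.1.trans hbc.1, hbc.2.trans hab.2⟩

theorem inv_lt_inv_of_notMem_invSet (hab : a < b) (h : (a, b) ∉ invSet m w) :
    w⁻¹ a < w⁻¹ b :=
  (not_lt.1 fun hlt => h (mem_invSet.2 ⟨hab, hlt⟩)).lt_of_ne (w⁻¹.injective.ne hab.ne)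

theorem mem_invSet_inv_mul (huw : invSet m u ⊆ invSet m w) :
    (a, b) ∈ invSet m (u⁻¹ * w) ↔ (u a, u b) ∈ invSet m w \ invSet m u := by
  simp only [mem_sdiff, mem_invSet, mul_inv_rev, inv_inv, Equiv.Perm.mul_apply,
    Equiv.Perm.coe_inv, Equiv.symm_apply_apply]
  constructor
  · rintro ⟨hab, hw⟩
    have hu : u a < u b := by
      refine lt_of_not_ge fun hle => ?_
      have hba : (u b, u a) ∈ invSet m u :=
        mem_invSet.2 ⟨hle.lt_of_ne (u.injective.ne hab.ne'), by simpa using hab⟩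
      exact lt_asymm hw (mem_invSet.1 (huw hba)).2
    exact ⟨⟨hu, hw⟩, fun h => lt_asymm hab h.2⟩
  · rintro ⟨⟨hu, hw⟩, hnot⟩
    exact ⟨(not_lt.1 fun h => hnot ⟨hu, h⟩).lt_of_ne fun h => hu.ne (congrArg u h), hw⟩

theorem image_invSet_inv_mul (huw : invSet m u ⊆ invSet m w) :
    (invSet m (u⁻¹ * w)).image (fun p => (u p.1, u p.2)) = invSet m w \ invSet m u := by
  ext ⟨a, b⟩
  simp only [mem_image, Prod.exists, mem_invSet_inv_mul huw, Prod.mk.injEq]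
  constructor
  · rintro ⟨i, j, h, rfl, rfl⟩
    exact h
  · intro h
    exact ⟨u⁻¹ a, u⁻¹ b, by simpa using h, by simp, by simp⟩

theorem card_invSet_inv_mul (huw : invSet m u ⊆ invSet m w) :
    #(invSet m (u⁻¹ * w)) = #(invSet m w \ invSet m u) := by
  rw [← image_invSet_inv_mul huw]
  exact (card_image_of_injective _ (u.injective.prodMap u.injective)).symm

end InversionSets

section Sorting

variable {m : ℕ} {α : Type*} [LinearOrder α] (ρ : Fin m → α) {a b : Fin m}

theorem mem_invSet_sort : (a, b) ∈ invSet m (Tuple.sort ρ) ↔ a < b ∧ ρ b < ρ a := by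
  obtain ⟨hmono, hstable⟩ := Tuple.eq_sort_iff.1 (rfl : Tuple.sort ρ = Tuple.sort ρ)
  rw [mem_invSet]
  refine and_congr_right fun hab => ⟨fun h => ?_, fun h => ?_⟩
  · refine lt_of_le_of_ne (by simpa using hmono h.le) fun heq => ?_
    have hba : b < a := by simpa using hstable _ _ h (by simpa using heq)
    exact lt_asymm hab hba
  · exact hmono.reflect_lt (by simpa using h)

/-- The permutation sorting `ρ` that lists the arguments with equal values in decreasing order;
`Tuple.sort ρ` lists them in increasing order. -/
def antistableSort : Equiv.Perm (Fin m) :=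
  Tuple.sort fun c => toLex (ρ c, toDual c)

theorem mem_invSet_antistableSort :
    (a, b) ∈ invSet m (antistableSort ρ) ↔ a < b ∧ ρ b ≤ ρ a := by
  rw [antistableSort, mem_invSet_sort]
  refine and_congr_right fun hab => ?_
  simp [Prod.Lex.toLex_lt_toLex, hab, le_iff_lt_or_eq]

theorem invSet_sort_subset_invSet_antistableSort :
    invSet m (Tuple.sort ρ) ⊆ invSet m (antistableSort ρ) := fun _ h =>
  have h' := (mem_invSet_sort ρ).1 h
  (mem_invSet_antistableSort ρ).2 ⟨h'.1, h'.2.le⟩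

theorem mem_invSet_antistableSort_sdiff_invSet_sort :
    (a, b) ∈ invSet m (antistableSort ρ) \ invSet m (Tuple.sort ρ) ↔ a < b ∧ ρ a = ρ b := by
  rw [mem_sdiff, mem_invSet_antistableSort, mem_invSet_sort]
  grind

end Sorting

section Blocks

variable {m : ℕ} {B : Finset (Fin m × Fin m)} {i j : Fin m}

/-- The contraction of the pairs of `B`: the first entry of a pair of `B` with second entry `a`,
and `a` itself if there is no such pair. For pairwise orthogonal `B` the pair is unique. -/
noncomputable def blockFst (B : Finset (Fin m × Fin m)) (a : Fin m) : Fin m :=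
  if h : ∃ i, (i, a) ∈ B then h.choose else a

theorem blockFst_eq_self_or_mem (B : Finset (Fin m × Fin m)) (a : Fin m) :
    blockFst B a = a ∨ (blockFst B a, a) ∈ B := by
  unfold blockFst
  split_ifs with h
  · exact .inr h.choose_spec
  · exact .inl rfl

theorem inv_le_inv_blockFst {v : Equiv.Perm (Fin m)} (hB : B ⊆ invSet m v) (j : Fin m) :
    v⁻¹ j ≤ v⁻¹ (blockFst B j) := by
  rcases blockFst_eq_self_or_mem B j with h | h
  · rw [h]
  · exact (mem_invSet.1 (hB h)).2.le

namespace PairwiseOrth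

theorem blockFst_snd (horth : PairwiseOrth B) (hij : (i, j) ∈ B) : blockFst B j = i := by
  have hex : ∃ k, (k, j) ∈ B := ⟨i, hij⟩
  rw [blockFst, dif_pos hex]
  by_contra hne
  exact (horth _ hex.choose_spec _ hij (by simpa using hne)).2.2.2 rfl

theorem blockFst_fst (horth : PairwiseOrth B) (hij : (i, j) ∈ B) : blockFst B i = i := by
  by_contra hne
  have hmem : (blockFst B i, i) ∈ B := (blockFst_eq_self_or_mem B i).resolve_left hne
  exact (horth _ hmem _ hij fun h => hne (Prod.ext_iff.1 h).1).2.2.1 rfl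

theorem blockFst_eq_blockFst_iff (horth : PairwiseOrth B) (hlt : ∀ p ∈ B, p.1 < p.2)
    (hij : i < j) : blockFst B i = blockFst B j ↔ (i, j) ∈ B := by
  refine ⟨fun h => ?_, fun h => by rw [horth.blockFst_fst h, horth.blockFst_snd h]⟩
  rcases blockFst_eq_self_or_mem B i with hi | hi <;>
    rcases blockFst_eq_self_or_mem B j with hj | hj
  · exact absurd (hi.symm.trans (h.trans hj)) hij.ne
  · rwa [← h, hi] at hj
  · rw [h, hj] at hi
    exact absurd (hlt _ hi) hij.not_gt
  · rw [h] at hi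
    exact absurd rfl (horth _ hi _ hj fun he => hij.ne (Prod.ext_iff.1 he).2).1

end PairwiseOrth

end Blocks

section ClosedSets

variable {m : ℕ} {A B : Finset (Fin m × Fin m)} {v : Equiv.Perm (Fin m)} {i j : Fin m}

theorem blockFst_mem_sdiff (htrans : ∀ a b c, (a, b) ∈ A → (b, c) ∈ A → (a, c) ∈ A)
    (hBA : B ⊆ A) (horth : PairwiseOrth B) (hne : i ≠ j) (hij : (i, j) ∈ A \ B) :
    (blockFst B i, j) ∈ A \ B := by
  rcases blockFst_eq_self_or_mem B i with h | h
  · rwa [h]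
  · refine mem_sdiff.2 ⟨htrans _ _ _ (hBA h) (mem_sdiff.1 hij).1, fun hB => ?_⟩
    exact (horth _ h _ hB fun he => hne (Prod.ext_iff.1 he).2).1 rfl

theorem inv_blockFst_le_inv_blockFst (hlt : ∀ p ∈ A, p.1 < p.2)
    (htrans : ∀ a b c, (a, b) ∈ A → (b, c) ∈ A → (a, c) ∈ A)
    (horth : PairwiseOrth (A ∩ invSet m v)) (hij : (i, j) ∈ A) :
    v⁻¹ (blockFst (A ∩ invSet m v) i) ≤ v⁻¹ (blockFst (A ∩ invSet m v) j) := by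
  have hlt_ij : i < j := hlt _ hij
  by_cases hB : (i, j) ∈ A ∩ invSet m v
  · rw [horth.blockFst_fst hB, horth.blockFst_snd hB]
  · obtain ⟨hmem, hnot⟩ := mem_sdiff.1 <| blockFst_mem_sdiff htrans inter_subset_left horth
      hlt_ij.ne (mem_sdiff.2 ⟨hij, hB⟩)
    have hnot_inv := fun h => hnot (mem_inter.2 ⟨hmem, h⟩)
    exact (inv_lt_inv_of_notMem_invSet (hlt _ hmem) hnot_inv).le.trans
      (inv_le_inv_blockFst inter_subset_right j)

end ClosedSets

theorem extension_with_block_general {m : ℕ} (A : Finset (Fin m × Fin m))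
    (hlt : ∀ p ∈ A, p.1 < p.2) (htrans : ∀ a b c, (a, b) ∈ A → (b, c) ∈ A → (a, c) ∈ A)
    (w₂ : Equiv.Perm (Fin m)) (B : Finset (Fin m × Fin m)) (hB : B = A ∩ invSet m w₂)
    (horth : PairwiseOrth B) :
    ∃ w u x : Equiv.Perm (Fin m),
      A ⊆ invSet m w ∧ w = u * x ∧
      (invSet m w).card = (invSet m u).card + (invSet m x).card ∧
      (invSet m x).card = B.card ∧
      B = (invSet m x).image (fun p => (u p.1, u p.2)) ∧
      ∀ p ∈ invSet m x, u p.1 < u p.2 := by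
  subst hB
  set B := A ∩ invSet m w₂
  have hltB : ∀ p ∈ B, p.1 < p.2 := fun p hp => hlt p (mem_inter.1 hp).1
  let ρ : Fin m → (Fin m)ᵒᵈ := fun c => toDual (w₂⁻¹ (blockFst B c))
  let u := Tuple.sort ρ
  let w := antistableSort ρ
  have huw : invSet m u ⊆ invSet m w := invSet_sort_subset_invSet_antistableSort ρ
  have hsdiff : invSet m w \ invSet m u = B := by
    ext ⟨a, b⟩
    rw [mem_invSet_antistableSort_sdiff_invSet_sort, toDual_inj, w₂⁻¹.injective.eq_iff]
    exact ⟨fun h => (horth.blockFst_eq_blockFst_iff hltB h.1).1 h.2,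
      fun h => ⟨hltB _ h, (horth.blockFst_eq_blockFst_iff hltB (hltB _ h)).2 h⟩⟩
  refine ⟨w, u, u⁻¹ * w, ?_, (mul_inv_cancel_left u w).symm, ?_, ?_, ?_, ?_⟩
  · exact fun _ h => (mem_invSet_antistableSort ρ).2
      ⟨hlt _ h, toDual_le_toDual.2 (inv_blockFst_le_inv_blockFst hlt htrans horth h)⟩
  · rw [card_invSet_inv_mul huw, add_comm, card_sdiff_add_card_eq_card huw]
  · rw [card_invSet_inv_mul huw, hsdiff]
  · rw [image_invSet_inv_mul huw, hsdiff]
  · exact fun p hp => hltB (u p.1, u p.2) (hsdiff ▸ (mem_invSet_inv_mul huw).1 hp)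

/-- If `B = N(w₁) ∩ N(w₂)` is nonempty and pairwise orthogonal, then `w₁` extends to some
`w₁''` having a reduced expression in which the roots of `B` are exactly the last `|B|`
roots. -/
theorem extension_with_block {m : ℕ} (w₁ w₂ : Equiv.Perm (Fin m))
    (B : Finset (Fin m × Fin m)) (hB : B = invSet m w₁ ∩ invSet m w₂)
    (hne : B.Nonempty) (horth : PairwiseOrth B) :
    ∃ w u x : Equiv.Perm (Fin m),
      invSet m w₁ ⊆ invSet m w ∧ w = u * x ∧
      (invSet m w).card = (invSet m u).card + (invSet m x).card ∧
      (invSet m x).card = B.card ∧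
      B = (invSet m x).image (fun p => (u p.1, u p.2)) ∧
      ∀ p ∈ invSet m x, u p.1 < u p.2 := by
  exact extension_with_block_general (invSet m w₁) (fun _ hp => (mem_invSet.1 hp).1)
    (fun _ _ _ => invSet_trans) w₂ B hB horth
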